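/- arXiv:2009.01704 — 5 statements merged into one kernel-verified Lean document; each statement's English description precedes it below -/
import Mathlib

section
/- Let 𝒳 and 𝒴 be finite types of the same cardinality K, let P_{X|Y} be a column-stochastic K×K real matrix, let P_Y be a positive probability vector on 𝒴, and set P_X = P_{X|Y} ⬝ P_Y, assumed positive. Define Q = [√P_X⁻¹] ⬝ P_{X|Y} ⬝ [√P_Y]. Then for every vector α ∈ ℝ^𝒴 one has ‖Q α‖ ≤ ‖α‖, where ‖·‖ is the Euclidean norm. (Equivalently: every singular value of Q is at most 1.) -/
open Matrix

/-- Euclidean norm of a real vector on a finite index type. -/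
noncomputable def euclNorm {I : Type*} [Fintype I] (v : I → ℝ) : ℝ :=
  Real.sqrt (∑ i, v i ^ 2)

/-- A matrix is column-stochastic if its entries are nonnegative and each column sums to 1. -/
def ColStochastic {I J : Type*} [Fintype I] (M : Matrix I J ℝ) : Prop :=
  (∀ i j, 0 ≤ M i j) ∧ ∀ j, ∑ i, M i j = 1

/-!
Writing `P` for the transition matrix and `v` for the input vector, Cauchy–Schwarz with weights
`P x y` in row `x` gives
`(∑ y, P x y * √(v y) * α y) ^ 2 ≤ (∑ y, P x y * v y) * ∑ y, P x y * α y ^ 2`.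
The first factor is `(P *ᵥ v) x`, which the normalization of `Q` cancels. Hence
`(Q *ᵥ α) x ^ 2 ≤ ∑ y, P x y * α y ^ 2`, and summing over `x` bounds `‖Q α‖ ^ 2` by the total mass
of the image of `α ^ 2` under `P`, which is at most the mass of `α ^ 2`.
-/

lemma sq_sum_mul_sqrt_mul_le {ι : Type*} (s : Finset ι) {w v : ι → ℝ} (hw : ∀ i ∈ s, 0 ≤ w i)
    (hv : ∀ i ∈ s, 0 ≤ v i) (α : ι → ℝ) :
    (∑ i ∈ s, w i * √(v i) * α i) ^ 2 ≤ (∑ i ∈ s, w i * v i) * ∑ i ∈ s, w i * α i ^ 2 := by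
  refine s.sum_sq_le_sum_mul_sum_of_sq_le_mul (fun i hi => mul_nonneg (hw i hi) (hv i hi))
    (fun i hi => mul_nonneg (hw i hi) (sq_nonneg _)) fun i hi => le_of_eq ?_
  rw [mul_pow, mul_pow, Real.sq_sqrt (hv i hi)]
  ring

lemma sum_mulVec_le_sum {R I J : Type*} [Semiring R] [PartialOrder R] [IsOrderedRing R]
    [Fintype I] [Fintype J] {P : Matrix I J R} (hP : ∀ j, ∑ i, P i j ≤ 1) {w : J → R}
    (hw : ∀ j, 0 ≤ w j) : ∑ i, (P *ᵥ w) i ≤ ∑ j, w j :=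
  calc ∑ i, (P *ᵥ w) i = ∑ j, (∑ i, P i j) * w j := by
        simp only [mulVec, dotProduct, Finset.sum_mul]
        exact Finset.sum_comm
    _ ≤ ∑ j, w j := Finset.sum_le_sum fun j _ => mul_le_of_le_one_left (hw j) (hP j)

section NormalizedTransition

variable {I J : Type*} [Fintype I] [Fintype J] [DecidableEq I] [DecidableEq J]

/-- The matrix `[√(P v)⁻¹] P [√v]`: the transition matrix `P` with input `v` and output `P v`,
rescaled so that it sends `√v` to `√(P v)`. A row where `P v` is not positive is zero, since
`(√x)⁻¹ = 0` for `x ≤ 0`. -/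
noncomputable def normalizedTransition (P : Matrix I J ℝ) (v : J → ℝ) : Matrix I J ℝ :=
  diagonal (fun i => (√((P *ᵥ v) i))⁻¹) * P * diagonal (fun j => √(v j))

lemma normalizedTransition_mulVec_apply (P : Matrix I J ℝ) (v α : J → ℝ) (i : I) :
    (normalizedTransition P v *ᵥ α) i =
      (√((P *ᵥ v) i))⁻¹ * ∑ j, P i j * √(v j) * α j := by
  simp only [normalizedTransition, mulVec, dotProduct, mul_diagonal, diagonal_mul,
    Finset.mul_sum, mul_assoc]

variable {P : Matrix I J ℝ} {v : J → ℝ}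

lemma sq_normalizedTransition_mulVec_le {i : I} (hP : ∀ j, 0 ≤ P i j) (hv : ∀ j, 0 ≤ v j)
    (hPv : 0 < (P *ᵥ v) i) (α : J → ℝ) :
    (normalizedTransition P v *ᵥ α) i ^ 2 ≤ (P *ᵥ fun j => α j ^ 2) i := by
  rw [normalizedTransition_mulVec_apply, mul_pow, inv_pow, Real.sq_sqrt hPv.le,
    inv_mul_le_iff₀ hPv]
  exact sq_sum_mul_sqrt_mul_le Finset.univ (fun j _ => hP j) (fun j _ => hv j) α

theorem stmt_0_general (hP : ∀ i j, 0 ≤ P i j) (hPsum : ∀ j, ∑ i, P i j ≤ 1)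
    (hv : ∀ j, 0 ≤ v j) (hPv : ∀ i, 0 < (P *ᵥ v) i) (α : J → ℝ) :
    euclNorm (normalizedTransition P v *ᵥ α) ≤ euclNorm α := by
  refine Real.sqrt_le_sqrt ?_
  calc ∑ i, (normalizedTransition P v *ᵥ α) i ^ 2
      ≤ ∑ i, (P *ᵥ fun j => α j ^ 2) i :=
        Finset.sum_le_sum fun i _ => sq_normalizedTransition_mulVec_le (hP i) hv (hPv i) α
    _ ≤ ∑ j, α j ^ 2 := sum_mulVec_le_sum hPsum fun j => sq_nonneg (α j)

end NormalizedTransition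

theorem stmt_0 {𝒳 𝒴 : Type*} [Fintype 𝒳] [Fintype 𝒴] [DecidableEq 𝒳] [DecidableEq 𝒴]
    (hcard : Fintype.card 𝒳 = Fintype.card 𝒴)
    (PXY : Matrix 𝒳 𝒴 ℝ) (hPXY : ColStochastic PXY)
    (PY : 𝒴 → ℝ) (hPYpos : ∀ y, 0 < PY y) (hPYsum : ∑ y, PY y = 1)
    (PX : 𝒳 → ℝ) (hPX : PX = PXY.mulVec PY) (hPXpos : ∀ x, 0 < PX x)
    (Q : Matrix 𝒳 𝒴 ℝ)
    (hQ : Q = diagonal (fun x => (Real.sqrt (PX x))⁻¹) * PXY *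
      diagonal (fun y => Real.sqrt (PY y)))
    (α : 𝒴 → ℝ) :
    euclNorm (Q.mulVec α) ≤ euclNorm α := by
  subst hPX hQ
  exact stmt_0_general hPXY.1 (fun y => (hPXY.2 y).le) (fun y => (hPYpos y).le) hPXpos α
end

section
/- Let 𝒳 and 𝒴 be finite types of the same cardinality K, let P_{X|Y} be an invertible column-stochastic K×K real matrix, let P_Y be a positive probability vector on 𝒴, and set P_X = P_{X|Y} ⬝ P_Y, assumed positive. Let W = [√P_Y⁻¹] ⬝ P_{X|Y}⁻¹ ⬝ [√P_X] and let √P_X denote the vector with entries √(P_X x). Then Wᵀ ⬝ W ⬝ √P_X = √P_X; in particular, √P_X is a right singular vector of W with singular value 1. -/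
open Matrix

/-!
Let `B` have unit column sums, let `B v² = u²` (entrywise squares) with `u` nowhere zero, and put
`W = [u⁻¹] B [v]`. Then `W v = [u⁻¹] B v² = u`, and dually `uᵀ W = 1ᵀ B [v] = vᵀ`, so `Wᵀ W v = v`.
The inverse of a matrix with unit column sums again has unit column sums, although it may have
negative entries, so this applies to `B = P_{X|Y}⁻¹`, `u = √P_Y` and `v = √P_X`.
-/

lemma ColStochastic.one_vecMul {I J : Type*} [Fintype I] {M : Matrix I J ℝ}
    (hM : ColStochastic M) : 1 ᵥ* M = 1 := by
  ext j
  simpa [vecMul, dotProduct] using hM.2 j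

section InverseMatrix

variable {m n R : Type*} [Fintype m] [Fintype n] [Semiring R] {A : Matrix m n R} {B : Matrix n m R}

lemma mulVec_eq_of_mul_eq_one [DecidableEq n] (hBA : B * A = 1) {x : n → R} {y : m → R}
    (hxy : A *ᵥ x = y) : B *ᵥ y = x := by
  rw [← hxy, mulVec_mulVec, hBA, one_mulVec]

lemma vecMul_eq_of_mul_eq_one [DecidableEq m] (hAB : A * B = 1) {x : n → R} {y : m → R}
    (hyx : y ᵥ* A = x) : x ᵥ* B = y := by
  rw [← hyx, vecMul_vecMul, hAB, vecMul_one]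

end InverseMatrix

section DivergenceTransition

variable {m n K : Type*} [Fintype m] [Fintype n] [DecidableEq m] [DecidableEq n] [Field K]

/-- The divergence transition matrix `[u⁻¹] B [v]` of `B`. It is parametrised by the vectors
`u` and `v` of square roots of the output and input weights, rather than by the weights themselves,
so that it makes sense over any field; `u` is meant to be nowhere zero. -/
def divergenceTransition (B : Matrix m n K) (u : m → K) (v : n → K) : Matrix m n K :=
  diagonal u⁻¹ * B * diagonal v

variable {B : Matrix m n K} {u : m → K} {v : n → K}

lemma divergenceTransition_mulVec (hu : ∀ i, u i ≠ 0) (hB : B *ᵥ v ^ 2 = u ^ 2) :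
    divergenceTransition B u v *ᵥ v = u := by
  have hv : diagonal v *ᵥ v = v ^ 2 := by
    ext j
    rw [mulVec_diagonal, Pi.pow_apply, sq]
  rw [divergenceTransition, ← mulVec_mulVec, ← mulVec_mulVec, hv, hB]
  ext i
  rw [mulVec_diagonal, Pi.inv_apply, Pi.pow_apply, sq, inv_mul_cancel_left₀ (hu i)]

lemma vecMul_divergenceTransition (hu : ∀ i, u i ≠ 0) (hB : 1 ᵥ* B = 1) :
    u ᵥ* divergenceTransition B u v = v := by
  have hu_inv : u ᵥ* diagonal u⁻¹ = 1 := by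
    ext i
    rw [vecMul_diagonal, Pi.inv_apply, mul_inv_cancel₀ (hu i), Pi.one_apply]
  rw [divergenceTransition, ← vecMul_vecMul, ← vecMul_vecMul, hu_inv, hB]
  ext j
  rw [vecMul_diagonal, Pi.one_apply, one_mul]

theorem stmt_1_general (hu : ∀ i, u i ≠ 0) (hB_one : 1 ᵥ* B = 1) (hB_sq : B *ᵥ v ^ 2 = u ^ 2) :
    ((divergenceTransition B u v)ᵀ * divergenceTransition B u v) *ᵥ v = v := by
  rw [← mulVec_mulVec, divergenceTransition_mulVec hu hB_sq, mulVec_transpose,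
    vecMul_divergenceTransition hu hB_one]

end DivergenceTransition

lemma pi_sq_sqrt {ι : Type*} {p : ι → ℝ} (hp : ∀ i, 0 ≤ p i) :
    (fun i => Real.sqrt (p i)) ^ 2 = p :=
  funext fun i => Real.sq_sqrt (hp i)

theorem stmt_1 {𝒳 𝒴 : Type*} [Fintype 𝒳] [Fintype 𝒴] [DecidableEq 𝒳] [DecidableEq 𝒴]
    (hcard : Fintype.card 𝒳 = Fintype.card 𝒴)
    (PXY : Matrix 𝒳 𝒴 ℝ) (hPXY : ColStochastic PXY)
    (PXYinv : Matrix 𝒴 𝒳 ℝ) (hinv1 : PXY * PXYinv = 1) (hinv2 : PXYinv * PXY = 1)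
    (PY : 𝒴 → ℝ) (hPYpos : ∀ y, 0 < PY y) (hPYsum : ∑ y, PY y = 1)
    (PX : 𝒳 → ℝ) (hPX : PX = PXY.mulVec PY) (hPXpos : ∀ x, 0 < PX x)
    (W : Matrix 𝒴 𝒳 ℝ)
    (hW : W = diagonal (fun y => (Real.sqrt (PY y))⁻¹) * PXYinv *
      diagonal (fun x => Real.sqrt (PX x))) :
    (Wᵀ * W).mulVec (fun x => Real.sqrt (PX x)) = (fun x => Real.sqrt (PX x)) := by
  have hone : 1 ᵥ* PXYinv = 1 := vecMul_eq_of_mul_eq_one hinv1 hPXY.one_vecMul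
  have hsq : PXYinv *ᵥ (fun x => Real.sqrt (PX x)) ^ 2 = (fun y => Real.sqrt (PY y)) ^ 2 := by
    rw [pi_sq_sqrt fun x => (hPXpos x).le, pi_sq_sqrt fun y => (hPYpos y).le]
    exact mulVec_eq_of_mul_eq_one hinv2 hPX.symm
  rw [hW]
  exact stmt_1_general (fun y => (Real.sqrt_pos.2 (hPYpos y)).ne') hone hsq
end

section
/- Assume the main setup: 𝒳, 𝒴 finite of equal cardinality K, P_{X|Y} an invertible column-stochastic matrix, P_Y a positive probability vector, P_X = P_{X|Y} ⬝ P_Y positive, and W = [√P_Y⁻¹] ⬝ P_{X|Y}⁻¹ ⬝ [√P_X]. Let 𝒰 be finite, P_U a probability vector on 𝒰, and J : 𝒰 → ℝ^𝒳 with ∑_x J_u(x) = 0 for all u, ∑_u P_U(u) • J_u = 0, and ∑_x J_u(x)²/P_X(x) ≤ 1 for all u. For ε ∈ ℝ define I_Y(ε) = ∑_u P_U(u) · ∑_y (P_Y(y) + ε·(P_{X|Y}⁻¹ ⬝ J_u)(y)) · log(1 + ε·(P_{X|Y}⁻¹ ⬝ J_u)(y)/P_Y(y)). Then the function ε ↦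 I_Y(ε) − (ε²/2) · ∑_u P_U(u) · ‖W ⬝ L_u‖² is o(ε²) as ε → 0, where L_u = [√P_X⁻¹] ⬝ J_u. -/
open Matrix Filter Asymptotics

/-!
With `klFun x = x * log x + 1 - x`, one has `klFun x = (x - 1) ^ 2 / 2 + o((x - 1) ^ 2)` at `1`,
because the derivative `log x` is `(x - 1) + o(x - 1)`. Evaluating at `1 + ε v_y / p_y` and summing
with weights `p_y` gives
`D(p + ε v ‖ p) = ε ∑ v_y + (ε² / 2) ∑ v_y² / p_y + o(ε²)`.
For `v = P_{X|Y}⁻¹ J_u`, averaging over `u` kills the linear term since the `J_u` average to zero,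
and the quadratic coefficient is `‖W L_u‖²` since the factors `√P_X` in `W` and `L_u` cancel.
-/

open InformationTheory (klFun hasDerivAt_klFun klFun_one klFun_apply)
open scoped Topology

theorem klFun_sub_sq_isLittleO :
    (fun x : ℝ => klFun x - (x - 1) ^ 2 / 2) =o[𝓝 1] fun x => (x - 1) ^ 2 := by
  have hderiv : ∀ x ∈ Set.Ioi (0 : ℝ), HasDerivWithinAt (fun x => klFun x - (x - 1) ^ 2 / 2)
      (Real.log x - (x - 1)) (Set.Ioi 0) x := fun x hx => by
    have hsq : HasDerivAt (fun x : ℝ => (x - 1) ^ 2 / 2) (x - 1) x := by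
      simpa using (((hasDerivAt_id x).sub_const 1).pow 2).div_const 2
    exact ((hasDerivAt_klFun (ne_of_gt hx)).sub hsq).hasDerivWithinAt
  have hlog : (fun x : ℝ => Real.log x - (x - 1)) =o[𝓝[Set.Ioi 0] 1] fun x => (x - 1) ^ 1 := by
    simpa using (Real.hasDerivAt_log one_ne_zero).isLittleO.mono nhdsWithin_le_nhds
  simpa [klFun_one, (isOpen_Ioi (a := (0 : ℝ))).nhdsWithin_eq (Set.mem_Ioi.2 one_pos)] using
    (convex_Ioi (0 : ℝ)).isLittleO_pow_succ_real (Set.mem_Ioi.2 one_pos) hderiv hlog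

theorem klFun_one_add_mul_sub_sq_isLittleO (a : ℝ) :
    (fun ε : ℝ => klFun (1 + ε * a) - (ε * a) ^ 2 / 2) =o[𝓝 0] fun ε => ε ^ 2 := by
  have hlim : Tendsto (fun ε : ℝ => 1 + ε * a) (𝓝 0) (𝓝 1) :=
    Continuous.tendsto' (by fun_prop) _ _ (by simp)
  have hcomp := klFun_sub_sq_isLittleO.comp_tendsto hlim
  simp only [Function.comp_def, add_sub_cancel_left] at hcomp
  refine hcomp.trans_isBigO ?_
  simpa only [mul_pow, mul_comm] using isBigO_const_mul_self (a ^ 2) (fun ε : ℝ => ε ^ 2) (𝓝 0)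

section RelativeEntropy

variable {𝒰 𝒴 : Type*} [Fintype 𝒴]

/-- The relative entropy `D(p + ε v ‖ p)` of the perturbation of `p` in direction `v`, as a function
of `ε`. No normalization is imposed on `p` or `v`. -/
noncomputable def perturbedRelEntropy (p v : 𝒴 → ℝ) (ε : ℝ) : ℝ :=
  ∑ y, (p y + ε * v y) * Real.log (1 + ε * v y / p y)

/-- The squared norm `∑ v² / p`, which is the `χ²`-divergence of `p + v` from `p`. Coordinates with
`p y = 0` contribute `0`. -/
noncomputable def chiSq (p v : 𝒴 → ℝ) : ℝ :=
  ∑ y, v y ^ 2 / p y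

theorem perturbedRelEntropy_eq_add_sum_klFun {p : 𝒴 → ℝ} (hp : ∀ y, p y ≠ 0) (v : 𝒴 → ℝ) (ε : ℝ) :
    perturbedRelEntropy p v ε = ε * ∑ y, v y + ∑ y, p y * klFun (1 + ε * (v y / p y)) := by
  rw [perturbedRelEntropy, Finset.mul_sum, ← Finset.sum_add_distrib]
  refine Finset.sum_congr rfl fun y _ => ?_
  have hmul : p y * (v y / p y) = v y := mul_div_cancel₀ _ (hp y)
  rw [klFun_apply, mul_div_assoc]
  linear_combination (ε - ε * Real.log (1 + ε * (v y / p y))) * hmul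

theorem perturbedRelEntropy_sub_isLittleO {p : 𝒴 → ℝ} (hp : ∀ y, p y ≠ 0) (v : 𝒴 → ℝ) :
    (fun ε => perturbedRelEntropy p v ε - ε * ∑ y, v y - ε ^ 2 / 2 * chiSq p v)
      =o[𝓝 0] fun ε => ε ^ 2 := by
  have hchi (ε : ℝ) : ε ^ 2 / 2 * chiSq p v = ∑ y, p y * ((ε * (v y / p y)) ^ 2 / 2) := by
    rw [chiSq, Finset.mul_sum]
    refine Finset.sum_congr rfl fun y _ => ?_
    field_simp [hp y]
  simp only [perturbedRelEntropy_eq_add_sum_klFun hp, add_sub_cancel_left, hchi,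
    ← Finset.sum_sub_distrib, ← mul_sub]
  exact IsLittleO.fun_sum fun y _ =>
    (klFun_one_add_mul_sub_sq_isLittleO (v y / p y)).const_mul_left (p y)

theorem sum_mul_perturbedRelEntropy_sub_isLittleO [Fintype 𝒰] {p : 𝒴 → ℝ} (hp : ∀ y, p y ≠ 0)
    {w : 𝒰 → ℝ} {v : 𝒰 → 𝒴 → ℝ} (hmean : ∑ u, w u * ∑ y, v u y = 0) :
    (fun ε => ∑ u, w u * perturbedRelEntropy p (v u) ε - ε ^ 2 / 2 * ∑ u, w u * chiSq p (v u))
      =o[𝓝 0] fun ε => ε ^ 2 := by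
  have hsum : (fun ε => ∑ u, w u * (perturbedRelEntropy p (v u) ε - ε * ∑ y, v u y
      - ε ^ 2 / 2 * chiSq p (v u))) =o[𝓝 0] fun ε => ε ^ 2 :=
    IsLittleO.fun_sum fun u _ => (perturbedRelEntropy_sub_isLittleO hp (v u)).const_mul_left (w u)
  refine hsum.congr_left fun ε => ?_
  simp only [mul_sub, Finset.sum_sub_distrib, mul_left_comm (w _), ← Finset.mul_sum, hmean,
    mul_zero, sub_zero]

end RelativeEntropy

section WeightedNorm

variable {𝒳 𝒴 : Type*} [Fintype 𝒳] [Fintype 𝒴]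

theorem euclNorm_sq (v : 𝒴 → ℝ) : euclNorm v ^ 2 = ∑ y, v y ^ 2 :=
  Real.sq_sqrt (Finset.sum_nonneg fun _ _ => sq_nonneg _)

variable [DecidableEq 𝒳] [DecidableEq 𝒴]

theorem euclNorm_diagonal_inv_sqrt_mulVec_sq {p : 𝒴 → ℝ} (hp : ∀ y, 0 ≤ p y) (v : 𝒴 → ℝ) :
    euclNorm ((diagonal fun y => (√(p y))⁻¹) *ᵥ v) ^ 2 = chiSq p v := by
  simp only [euclNorm_sq, chiSq, mulVec_diagonal, inv_mul_eq_div, div_pow,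
    Real.sq_sqrt (hp _)]

theorem diagonal_sqrt_mulVec_diagonal_inv_sqrt_mulVec {q : 𝒳 → ℝ} (hq : ∀ x, 0 < q x)
    (v : 𝒳 → ℝ) : (diagonal fun x => √(q x)) *ᵥ ((diagonal fun x => (√(q x))⁻¹) *ᵥ v) = v := by
  ext x
  rw [mulVec_diagonal, mulVec_diagonal, mul_inv_cancel_left₀ (Real.sqrt_pos.2 (hq x)).ne']

theorem euclNorm_inv_sqrt_mul_mul_sqrt_mulVec_sq {p : 𝒴 → ℝ} (hp : ∀ y, 0 ≤ p y) {q : 𝒳 → ℝ}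
    (hq : ∀ x, 0 < q x) (A : Matrix 𝒴 𝒳 ℝ) (v : 𝒳 → ℝ) :
    euclNorm (((diagonal fun y => (√(p y))⁻¹) * A * diagonal fun x => √(q x)) *ᵥ
      ((diagonal fun x => (√(q x))⁻¹) *ᵥ v)) ^ 2 = chiSq p (A *ᵥ v) := by
  rw [← mulVec_mulVec, diagonal_sqrt_mulVec_diagonal_inv_sqrt_mulVec hq, ← mulVec_mulVec,
    euclNorm_diagonal_inv_sqrt_mulVec_sq hp]

end WeightedNorm

theorem sum_mul_sum_mulVec_eq_zero {R 𝒰 𝒳 𝒴 : Type*} [CommSemiring R] [Fintype 𝒰] [Fintype 𝒳]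
    [Fintype 𝒴] (A : Matrix 𝒴 𝒳 R) {w : 𝒰 → R} {J : 𝒰 → 𝒳 → R} (hJ : ∑ u, w u • J u = 0) :
    ∑ u, w u * ∑ y, (A *ᵥ J u) y = 0 :=
  calc ∑ u, w u * ∑ y, (A *ᵥ J u) y
    _ = ∑ y, (∑ u, w u • A *ᵥ J u) y := by
      simp only [Finset.mul_sum, Finset.sum_apply, Pi.smul_apply, smul_eq_mul]
      exact Finset.sum_comm
    _ = ∑ y, (A *ᵥ ∑ u, w u • J u) y := by simp only [mulVec_sum, mulVec_smul]
    _ = 0 := by simp [hJ]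

theorem stmt_7_general {𝒳 𝒴 𝒰 : Type*} [Fintype 𝒳] [Fintype 𝒴] [Fintype 𝒰]
    [DecidableEq 𝒳] [DecidableEq 𝒴] (A : Matrix 𝒴 𝒳 ℝ)
    (PY : 𝒴 → ℝ) (hPYpos : ∀ y, 0 < PY y) (PX : 𝒳 → ℝ) (hPXpos : ∀ x, 0 < PX x)
    (W : Matrix 𝒴 𝒳 ℝ)
    (hW : W = diagonal (fun y => (√(PY y))⁻¹) * A * diagonal (fun x => √(PX x)))
    (w : 𝒰 → ℝ) (J : 𝒰 → 𝒳 → ℝ) (hJ : ∑ u, w u • J u = 0)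
    (IY : ℝ → ℝ)
    (hIY : ∀ ε, IY ε = ∑ u, w u * perturbedRelEntropy PY (A *ᵥ J u) ε)
    (L : 𝒰 → 𝒳 → ℝ)
    (hL : ∀ u, L u = (diagonal fun x => (√(PX x))⁻¹) *ᵥ J u) :
    (fun ε => IY ε - ε ^ 2 / 2 * ∑ u, w u * euclNorm (W *ᵥ L u) ^ 2)
      =o[𝓝 0] fun ε => ε ^ 2 := by
  have hnorm (u : 𝒰) : euclNorm (W *ᵥ L u) ^ 2 = chiSq PY (A *ᵥ J u) := by
    rw [hW, hL, euclNorm_inv_sqrt_mul_mul_sqrt_mulVec_sq (fun y => (hPYpos y).le) hPXpos]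
  simp only [hIY, hnorm]
  exact sum_mul_perturbedRelEntropy_sub_isLittleO (fun y => (hPYpos y).ne')
    (sum_mul_sum_mulVec_eq_zero A hJ)

theorem stmt_7 {𝒳 𝒴 𝒰 : Type*} [Fintype 𝒳] [Fintype 𝒴] [Fintype 𝒰]
    [DecidableEq 𝒳] [DecidableEq 𝒴]
    (hcard : Fintype.card 𝒳 = Fintype.card 𝒴)
    (PXY : Matrix 𝒳 𝒴 ℝ) (hPXY : ColStochastic PXY)
    (PXYinv : Matrix 𝒴 𝒳 ℝ) (hinv1 : PXY * PXYinv = 1) (hinv2 : PXYinv * PXY = 1)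
    (PY : 𝒴 → ℝ) (hPYpos : ∀ y, 0 < PY y) (hPYsum : ∑ y, PY y = 1)
    (PX : 𝒳 → ℝ) (hPX : PX = PXY.mulVec PY) (hPXpos : ∀ x, 0 < PX x)
    (W : Matrix 𝒴 𝒳 ℝ)
    (hW : W = diagonal (fun y => (Real.sqrt (PY y))⁻¹) * PXYinv *
      diagonal (fun x => Real.sqrt (PX x)))
    (PU : 𝒰 → ℝ) (hPUnn : ∀ u, 0 ≤ PU u) (hPUsum : ∑ u, PU u = 1)
    (J : 𝒰 → 𝒳 → ℝ)
    (hJ1 : ∀ u, ∑ x, J u x = 0)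
    (hJ2 : ∑ u, PU u • J u = 0)
    (hJ3 : ∀ u, ∑ x, J u x ^ 2 / PX x ≤ 1)
    (IY : ℝ → ℝ)
    (hIY : ∀ ε, IY ε =
      ∑ u, PU u * ∑ y, (PY y + ε * PXYinv.mulVec (J u) y) *
        Real.log (1 + ε * PXYinv.mulVec (J u) y / PY y))
    (L : 𝒰 → 𝒳 → ℝ)
    (hL : ∀ u, L u = (diagonal fun x => (Real.sqrt (PX x))⁻¹).mulVec (J u)) :
    (fun ε => IY ε - ε ^ 2 / 2 * ∑ u, PU u * euclNorm (W.mulVec (L u)) ^ 2)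
      =o[nhds 0] (fun ε => ε ^ 2) :=
  stmt_7_general PXYinv PY hPYpos PX hPXpos W hW PU J hJ2 IY hIY L hL
end

section
/- Assume the main setup: 𝒳, 𝒴 finite of equal cardinality K, P_{X|Y} an invertible column-stochastic matrix, P_Y a positive probability vector, P_X = P_{X|Y} ⬝ P_Y positive. Let 𝒰 be finite, P_U a probability vector on 𝒰, and for each u with P_U(u) > 0 let P_{Y|U=u} be a probability vector on 𝒴 with ∑_u P_U(u) • P_{Y|U=u} = P_Y, and set P_{X|U=u} = P_{X|Y} ⬝ P_{Y|U=u} (the Markov chain X−Y−U). Then ∑_{u} P_U(u) · ‖[√P_Y⁻¹] ⬝ P_{X|Y}⁻¹ ⬝ (P_{X|U=u} − P_X)‖² = ∑_{u} P_U(u) · χ²(P_{Y|U=u} ‖ P_Y), i.e. the weighted squared-norm objective equals the χ²-information between Y and U. -/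
open Matrix

/-- The `χ²`-divergence `χ²(p‖q)` of `p` from a positive vector `q`. Neither vector is required to
be a probability vector; where `q i = 0`, Lean's division makes the `i`-th term vanish. -/
noncomputable def chiSqDiv {I : Type*} [Fintype I] (p q : I → ℝ) : ℝ :=
  ∑ i, (p i - q i) ^ 2 / q i

theorem sq_euclNorm {I : Type*} [Fintype I] (v : I → ℝ) : euclNorm v ^ 2 = ∑ i, v i ^ 2 :=
  Real.sq_sqrt (Finset.sum_nonneg fun i _ => sq_nonneg (v i))

theorem sq_euclNorm_diagonal_inv_sqrt_mulVec {I : Type*} [Fintype I] [DecidableEq I]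
    {w : I → ℝ} (hw : ∀ i, 0 ≤ w i) (v : I → ℝ) :
    euclNorm (diagonal (fun i => (Real.sqrt (w i))⁻¹) *ᵥ v) ^ 2 = ∑ i, v i ^ 2 / w i := by
  rw [sq_euclNorm]
  refine Finset.sum_congr rfl fun i _ => ?_
  rw [mulVec_diagonal, inv_mul_eq_div, div_pow, Real.sq_sqrt (hw i)]

theorem mul_mulVec_mulVec_of_mul_eq_one {R I J K : Type*} [Semiring R] [Fintype I] [Fintype J]
    [DecidableEq J] {M : Matrix I J R} {N : Matrix J I R} (hNM : N * M = 1)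
    (D : Matrix K J R) (v : J → R) : (D * N) *ᵥ (M *ᵥ v) = D *ᵥ v := by
  rw [mulVec_mulVec, Matrix.mul_assoc, hNM, Matrix.mul_one]

theorem sq_euclNorm_diagonal_inv_sqrt_mul_mulVec_sub {I J : Type*} [Fintype I] [Fintype J]
    [DecidableEq J] {M : Matrix I J ℝ} {N : Matrix J I ℝ} (hNM : N * M = 1)
    {q : J → ℝ} (hq : ∀ j, 0 ≤ q j) (p : J → ℝ) :
    euclNorm ((diagonal (fun j => (Real.sqrt (q j))⁻¹) * N) *ᵥ (M *ᵥ p - M *ᵥ q)) ^ 2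
      = chiSqDiv p q := by
  rw [← mulVec_sub, mul_mulVec_mulVec_of_mul_eq_one hNM, sq_euclNorm_diagonal_inv_sqrt_mulVec hq]
  simp only [chiSqDiv, Pi.sub_apply]

theorem stmt_8_general {𝒳 𝒴 𝒰 : Type*} [Fintype 𝒳] [Fintype 𝒴] [Fintype 𝒰] [DecidableEq 𝒴]
    {M : Matrix 𝒳 𝒴 ℝ} {N : Matrix 𝒴 𝒳 ℝ} (hNM : N * M = 1)
    {q : 𝒴 → ℝ} (hq : ∀ y, 0 < q y) {r : 𝒳 → ℝ} (hr : r = M *ᵥ q)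
    (w : 𝒰 → ℝ) (p : 𝒰 → 𝒴 → ℝ) {s : 𝒰 → 𝒳 → ℝ} (hs : ∀ u, s u = M *ᵥ p u) :
    ∑ u, w u * euclNorm ((diagonal (fun y => (Real.sqrt (q y))⁻¹) * N) *ᵥ (s u - r)) ^ 2
      = ∑ u, w u * chiSqDiv (p u) q := by
  refine Finset.sum_congr rfl fun u _ => ?_
  rw [hs, hr, sq_euclNorm_diagonal_inv_sqrt_mul_mulVec_sub hNM fun y => (hq y).le]

theorem stmt_8 {𝒳 𝒴 𝒰 : Type*} [Fintype 𝒳] [Fintype 𝒴] [Fintype 𝒰]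
    [DecidableEq 𝒳] [DecidableEq 𝒴]
    (hcard : Fintype.card 𝒳 = Fintype.card 𝒴)
    (PXY : Matrix 𝒳 𝒴 ℝ) (hPXY : ColStochastic PXY)
    (PXYinv : Matrix 𝒴 𝒳 ℝ) (hinv1 : PXY * PXYinv = 1) (hinv2 : PXYinv * PXY = 1)
    (PY : 𝒴 → ℝ) (hPYpos : ∀ y, 0 < PY y) (hPYsum : ∑ y, PY y = 1)
    (PX : 𝒳 → ℝ) (hPX : PX = PXY.mulVec PY) (hPXpos : ∀ x, 0 < PX x)
    (PU : 𝒰 → ℝ) (hPUnn : ∀ u, 0 ≤ PU u) (hPUsum : ∑ u, PU u = 1)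
    (PYgU : 𝒰 → 𝒴 → ℝ)
    (hPYgUprob : ∀ u, 0 < PU u → (∀ y, 0 ≤ PYgU u y) ∧ ∑ y, PYgU u y = 1)
    (hmix : ∑ u, PU u • PYgU u = PY)
    (PXgU : 𝒰 → 𝒳 → ℝ) (hPXgU : ∀ u, PXgU u = PXY.mulVec (PYgU u)) :
    ∑ u, PU u *
        euclNorm ((diagonal (fun y => (Real.sqrt (PY y))⁻¹) * PXYinv).mulVec
          (fun x => PXgU u x - PX x)) ^ 2
      = ∑ u, PU u * ∑ y, (PYgU u y - PY y) ^ 2 / PY y :=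
  stmt_8_general hinv2 hPYpos hPX PU PYgU hPXgU
end

section
/- Let a, c be real numbers with (a ≥ 1 and c ≤ 0) or (a ≤ 0 and c ≥ 1), and let p ∈ [0,1]. Set s = (a − c)·p + c. Then: (i) if s ≥ 1/2, then (c − a)²·p·(1 − p) ≤ 4·(c − 1/2)·(1/2 − a)·s²; (ii) if s ≤ 1/2, then (c − a)²·p·(1 − p) ≤ 4·(c − 1/2)·(1/2 − a)·(1 − s)². Moreover, for p = (1/2 − c)/(a − c) one has s = 1/2 and equality (c − a)²·p·(1 − p) = 4·(c − 1/2)·(1/2 − a)·s² in (i). -/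
/-!
In terms of `s = (a - c) * p + c` the left-hand side is `(s - c) * (a - s)`, and the gap in the
first inequality factors as `(2 * s - 1) * (s * (a + c - 2 * a * c) - a * c)`. It is nonnegative for
`1 / 2 ≤ s` because the sign conditions say exactly that `a * c ≤ 0` and `(1 - a) * (1 - c) ≤ 0`,
whereas `a + c - 2 * a * c = 1 - a * c - (1 - a) * (1 - c)`. These two conditions are swapped
by `(a, c, s) ↦ (1 - a, 1 - c, 1 - s)`, which turns the first inequality into the second.
-/

theorem sq_sub_mul_mul_one_sub_eq {R : Type*} [CommRing R] {a c p s : R}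
    (hs : s = (a - c) * p + c) :
    (c - a) ^ 2 * p * (1 - p) = (s - c) * (a - s) := by
  rw [hs]
  ring

section Field

variable {K : Type*} [Field K]

theorem sub_mul_sub_gap_eq_mul [NeZero (2 : K)] (a c s : K) :
    4 * (c - 1 / 2) * (1 / 2 - a) * s ^ 2 - (s - c) * (a - s) =
      (2 * s - 1) * (s * (a + c - 2 * a * c) - a * c) := by
  field_simp
  ring

theorem sub_mul_add_eq_of_eq_div {a c p t : K} (hac : a ≠ c) (hp : p = (t - c) / (a - c)) :
    (a - c) * p + c = t := by
  rw [hp, mul_div_cancel₀ _ (sub_ne_zero.2 hac), sub_add_cancel]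

variable [LinearOrder K] [IsStrictOrderedRing K] {a c s : K}

theorem mul_nonpos_of_sign (h : (1 ≤ a ∧ c ≤ 0) ∨ (a ≤ 0 ∧ 1 ≤ c)) : a * c ≤ 0 := by
  rcases h with ⟨ha, hc⟩ | ⟨ha, hc⟩
  · exact mul_nonpos_of_nonneg_of_nonpos (zero_le_one.trans ha) hc
  · exact mul_nonpos_of_nonpos_of_nonneg ha (zero_le_one.trans hc)

theorem sign_one_sub (h : (1 ≤ a ∧ c ≤ 0) ∨ (a ≤ 0 ∧ 1 ≤ c)) :
    (1 ≤ 1 - a ∧ 1 - c ≤ 0) ∨ (1 - a ≤ 0 ∧ 1 ≤ 1 - c) := by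
  simpa only [le_sub_self_iff, sub_nonpos, and_comm, or_comm] using h

theorem ne_of_sign (h : (1 ≤ a ∧ c ≤ 0) ∨ (a ≤ 0 ∧ 1 ≤ c)) : a ≠ c := by
  rintro rfl
  rcases h with ⟨one_le, le_zero⟩ | ⟨le_zero, one_le⟩ <;>
    exact zero_lt_one.not_ge (one_le.trans le_zero)

theorem sub_mul_sub_le_of_half_le (h : (1 ≤ a ∧ c ≤ 0) ∨ (a ≤ 0 ∧ 1 ≤ c)) (hs : 1 / 2 ≤ s) :
    (s - c) * (a - s) ≤ 4 * (c - 1 / 2) * (1 / 2 - a) * s ^ 2 := by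
  have prod_nonpos : a * c ≤ 0 := mul_nonpos_of_sign h
  have prod_one_sub_nonpos : (1 - a) * (1 - c) ≤ 0 := mul_nonpos_of_sign (sign_one_sub h)
  have slope_nonneg : 0 ≤ a + c - 2 * a * c := by linarith
  have s_nonneg : 0 ≤ s := one_half_pos.le.trans hs
  rw [← sub_nonneg, sub_mul_sub_gap_eq_mul]
  exact mul_nonneg (by linarith)
    (sub_nonneg.2 (prod_nonpos.trans (mul_nonneg s_nonneg slope_nonneg)))

theorem sub_mul_sub_le_of_le_half (h : (1 ≤ a ∧ c ≤ 0) ∨ (a ≤ 0 ∧ 1 ≤ c)) (hs : s ≤ 1 / 2) :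
    (s - c) * (a - s) ≤ 4 * (c - 1 / 2) * (1 / 2 - a) * (1 - s) ^ 2 := by
  have reflected := sub_mul_sub_le_of_half_le (s := 1 - s) (sign_one_sub h) (by linarith)
  linarith

theorem stmt_14_general (h : (1 ≤ a ∧ c ≤ 0) ∨ (a ≤ 0 ∧ 1 ≤ c)) {p : K}
    (hs : s = (a - c) * p + c) :
    ((1 / 2 ≤ s → (c - a) ^ 2 * p * (1 - p) ≤ 4 * (c - 1 / 2) * (1 / 2 - a) * s ^ 2) ∧
     (s ≤ 1 / 2 → (c - a) ^ 2 * p * (1 - p) ≤ 4 * (c - 1 / 2) * (1 / 2 - a) * (1 - s) ^ 2)) ∧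
    (p = (1 / 2 - c) / (a - c) →
      s = 1 / 2 ∧ (c - a) ^ 2 * p * (1 - p) = 4 * (c - 1 / 2) * (1 / 2 - a) * s ^ 2) := by
  rw [sq_sub_mul_mul_one_sub_eq hs]
  refine ⟨⟨sub_mul_sub_le_of_half_le h, sub_mul_sub_le_of_le_half h⟩, fun hp => ?_⟩
  have s_eq_half : s = 1 / 2 := hs.trans (sub_mul_add_eq_of_eq_div (ne_of_sign h) hp)
  refine ⟨s_eq_half, (sub_eq_zero.1 ?_).symm⟩
  rw [sub_mul_sub_gap_eq_mul, s_eq_half, mul_one_div_cancel two_ne_zero, sub_self, zero_mul]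

end Field

theorem stmt_14 (a c p : ℝ) (h : (1 ≤ a ∧ c ≤ 0) ∨ (a ≤ 0 ∧ 1 ≤ c))
    (hp0 : 0 ≤ p) (hp1 : p ≤ 1) (s : ℝ) (hs : s = (a - c) * p + c) :
    ((1/2 ≤ s → (c - a) ^ 2 * p * (1 - p) ≤ 4 * (c - 1/2) * (1/2 - a) * s ^ 2) ∧
     (s ≤ 1/2 → (c - a) ^ 2 * p * (1 - p) ≤ 4 * (c - 1/2) * (1/2 - a) * (1 - s) ^ 2)) ∧
    (p = (1/2 - c) / (a - c) →
      s = 1/2 ∧ (c - a) ^ 2 * p * (1 - p) = 4 * (c - 1/2) * (1/2 - a) * s ^ 2) :=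
  stmt_14_general h hs
end
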